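/- Let μ be a T-invariant Borel probability measure on Ω satisfying the variance inequality: there is C > 0 such that for every n ≥ 1 and every separately d_θ-Lipschitz K : Ω^n → ℝ, ∫ (K(x,Tx,…,T^{n−1}x) − ∫ K(y,Ty,…,T^{n−1}y) dμ(y))² dμ(x) ≤ C Σ_{i=0}^{n−1} Lip_{θ,i}(K)². Let f : Ω → ℝ be d_θ-Lipschitz with ∫ f dμ = 0; suppose the series σ²(f) := ∫ f² dμ + 2 Σ_{ℓ≥1} ∫ f·(f∘T^ℓ) dμ converges with σ²(f) > 0, and suppose that S_n f/√n (with S_nf = Σ_{i=0}^{n−1} f∘T^i) converges in law under μ to the centered Gaussian law G_{0,σ²(f)} with variance σ²(f). Then for μ-almost every x ∈ Ω, W₁(𝒜_N(x), G_{0,σ²(f)}) → 0 as N → ∞, where 𝒜_N(x) = (1/L_N) Σ_{n=1}^{N} (1/n) δ_{S_nf(x)/√n}, L_N = Σ_{n=1}^{N} 1/n, and W₁ denotes the Wasserstein-1 distance between Borel probability measures on ℝ (with cost |u−v|). -/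

import Mathlib

open MeasureTheory Filter Topology
open scoped ENNReal NNReal BigOperators

noncomputable section

/-- The shift map on `Ω = Aℕ`. -/
def shift {A : Type*} (x : ℕ → A) : ℕ → A := fun k => x (k + 1)

/-- Prepend a symbol `a` to `x`. -/
def cons {A : Type*} (a : A) (x : ℕ → A) : ℕ → A := fun k =>
  match k with
  | 0 => a
  | k + 1 => x k

/-- Prepend a word `a ∈ Aⁿ` to `x`. -/
def wcat {A : Type*} {n : ℕ} (a : Fin n → A) (x : ℕ → A) : ℕ → A := fun k =>
  if h : k < n then a ⟨k, h⟩ else x (k - n)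

/-- The metric `d_θ(x,y) = θ^(first disagreement)`. -/
def dtheta {A : Type*} (θ : ℝ) (x y : ℕ → A) : ℝ :=
  letI := Classical.dec (x = y)
  if x = y then 0 else θ ^ sInf {k | x k ≠ y k}

/-- `K : Ωⁿ → ℝ` is separately `d_θ`-Lipschitz with constants `ℓ i`. -/
def SepLip {A : Type*} (θ : ℝ) {n : ℕ} (K : (Fin n → (ℕ → A)) → ℝ) (ℓ : Fin n → ℝ) : Prop :=
  ∀ (x : Fin n → (ℕ → A)) (i : Fin n) (x' : ℕ → A),
    |K x - K (Function.update x i x')| ≤ ℓ i * dtheta θ (x i) x'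

/-- Gaussian concentration bound with constant `C`. -/
def GCB {A : Type*} [MeasurableSpace A] (θ C : ℝ) (μ : Measure (ℕ → A)) : Prop :=
  ∀ (n : ℕ), 1 ≤ n → ∀ (K : (Fin n → (ℕ → A)) → ℝ) (ℓ : Fin n → ℝ), SepLip θ K ℓ →
    ∫ x, Real.exp (K (fun i => shift^[(i : ℕ)] x)) ∂μ ≤
      Real.exp (∫ y, K (fun i => shift^[(i : ℕ)] y) ∂μ) * Real.exp (C * ∑ j, ℓ j ^ 2)

/-- Birkhoff sum `S_n f`. -/
def birk {A : Type*} (f : (ℕ → A) → ℝ) (n : ℕ) (x : ℕ → A) : ℝ :=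
  ∑ i ∈ Finset.range n, f (shift^[i] x)

/-- Variation `var_n(φ)` (as an extended real). -/
def evar {A : Type*} (φ : (ℕ → A) → ℝ) (n : ℕ) : ℝ≥0∞ :=
  ⨆ (x : ℕ → A) (y : ℕ → A) (_ : ∀ i < n, x i = y i), ENNReal.ofReal |φ x - φ y|

/-- `W(φ,x,y)` (as an extended real). -/
def Wpair {A : Type*} (φ : (ℕ → A) → ℝ) (x y : ℕ → A) : ℝ≥0∞ :=
  ⨆ (n : ℕ) (a : Fin n → A), ENNReal.ofReal |birk φ n (wcat a x) - birk φ n (wcat a y)|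

/-- `W_p(φ)` (as an extended real). -/
def Wp {A : Type*} (φ : (ℕ → A) → ℝ) (p : ℕ) : ℝ≥0∞ :=
  ⨆ (x : ℕ → A) (y : ℕ → A) (_ : ∀ i < p, x i = y i), Wpair φ x y

/-- Walters' condition. -/
def Walters {A : Type*} (φ : (ℕ → A) → ℝ) : Prop :=
  (⨆ (x : ℕ → A) (y : ℕ → A), Wpair φ x y) ≠ ⊤ ∧ (∀ p, 0 < Wp φ p) ∧
    Antitone (Wp φ) ∧ Tendsto (Wp φ) atTop (𝓝 0)

/-- Ruelle's transfer operator `P_φ`. -/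
def transfer {A : Type*} [Fintype A] (φ f : (ℕ → A) → ℝ) (x : ℕ → A) : ℝ :=
  ∑ a : A, Real.exp (φ (cons a x)) * f (cons a x)
/-- Wasserstein-1 distance between Borel probability measures on ℝ (cost `|u - v|`). -/
def W1 (ν ν' : Measure ℝ) : ℝ :=
  sInf {r : ℝ | ∃ π : Measure (ℝ × ℝ), IsProbabilityMeasure π ∧
    π.map Prod.fst = ν ∧ π.map Prod.snd = ν' ∧ r = ∫ z, |z.1 - z.2| ∂π}

/-- The random measure `𝒜_N(x) = (1/L_N) Σ_{n=1}^N (1/n) δ_{S_n f(x)/√n}`. -/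
def ANmeas {A : Type*} (f : (ℕ → A) → ℝ) (x : ℕ → A) (N : ℕ) : Measure ℝ :=
  (ENNReal.ofReal (∑ n ∈ Finset.Icc 1 N, (1 : ℝ) / n))⁻¹ •
    ∑ n ∈ Finset.Icc 1 N,
      (ENNReal.ofReal ((1 : ℝ) / n)) • Measure.dirac (birk f n x / Real.sqrt n)


/-! ### Harmonic sums -/

def HH (N : ℕ) : ℝ := ∑ n ∈ Finset.Icc 1 N, (1 : ℝ) / n

lemma HH_eq (N : ℕ) : HH N = (harmonic N : ℝ) := by
  rw [HH, harmonic_eq_sum_Icc]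
  push_cast
  simp

lemma HH_nonneg (N : ℕ) : 0 ≤ HH N := Finset.sum_nonneg fun _ _ => by positivity

lemma HH_pos {N : ℕ} (h : 1 ≤ N) : 0 < HH N :=
  Finset.sum_pos (fun n hn => by
    have := (Finset.mem_Icc.1 hn).1
    positivity) ⟨1, by simp [h]⟩

lemma HH_mono : Monotone HH := fun a b h =>
  Finset.sum_le_sum_of_subset_of_nonneg (Finset.Icc_subset_Icc_right h) fun _ _ _ => by positivity

lemma HH_lower (k : ℕ) : (k : ℝ) ^ 2 * Real.log 2 ≤ HH (2 ^ (k ^ 2)) := by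
  rw [HH_eq]
  refine le_trans ?_ (log_add_one_le_harmonic _)
  have : (k : ℝ) ^ 2 * Real.log 2 = Real.log ((2 : ℝ) ^ (k ^ 2)) := by
    rw [Real.log_pow]; push_cast; ring
  rw [this]
  apply Real.log_le_log (by positivity)
  push_cast
  linarith

lemma HH_upper (k : ℕ) : HH (2 ^ (k ^ 2)) ≤ 1 + (k : ℝ) ^ 2 * Real.log 2 := by
  rw [HH_eq]
  refine (harmonic_le_one_add_log _).trans (le_of_eq ?_)
  push_cast
  rw [Real.log_pow]; push_cast; ring

lemma HH_tendsto : Tendsto HH atTop atTop := by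
  have h : Tendsto (fun N : ℕ => Real.log ((N + 1 : ℕ) : ℝ)) atTop atTop :=
    Real.tendsto_log_atTop.comp (tendsto_natCast_atTop_atTop.comp (tendsto_add_atTop_nat 1))
  refine tendsto_atTop_mono (fun N => ?_) h
  rw [HH_eq]
  exact log_add_one_le_harmonic N

lemma sum_Icc_range (a : ℕ → ℝ) (N : ℕ) :
    ∑ n ∈ Finset.Icc 1 N, a n = ∑ i ∈ Finset.range N, a (i + 1) := by
  rw [Finset.range_eq_Ico, Finset.sum_Ico_add' a 0 N 1]
  rfl

lemma log_cesaro (a : ℕ → ℝ) (m : ℝ) (h : Tendsto a atTop (𝓝 m)) :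
    Tendsto (fun N => (∑ n ∈ Finset.Icc 1 N, (1 : ℝ) / n * a n) / HH N) atTop (𝓝 m) := by
  have h1 : Tendsto (fun i : ℕ => a (i + 1) - m) atTop (𝓝 0) := by
    have := ((tendsto_add_atTop_iff_nat 1).2 h).sub_const m
    simpa using this
  have h2 : (fun i : ℕ => (1 : ℝ) / (i + 1 : ℕ) * (a (i + 1) - m)) =o[atTop]
      (fun i : ℕ => (1 : ℝ) / (i + 1 : ℕ)) := by
    have := (Asymptotics.isBigO_refl (fun i : ℕ => (1 : ℝ) / (i + 1 : ℕ)) atTop).mul_isLittleO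
      ((Asymptotics.isLittleO_one_iff ℝ).2 h1)
    simpa using this
  have hH : ∀ N, ∑ i ∈ Finset.range N, (1 : ℝ) / (i + 1 : ℕ) = HH N := fun N => by
    rw [HH, sum_Icc_range (fun n => (1 : ℝ) / n)]
  have h3 := h2.sum_range (fun i => by positivity)
    (by simp_rw [hH]; exact HH_tendsto)
  simp_rw [hH] at h3
  have h4 := h3.tendsto_div_nhds_zero
  have h5 := h4.add_const m
  rw [zero_add] at h5
  refine h5.congr' ?_
  filter_upwards [eventually_ge_atTop 1] with N hN
  have hp := HH_pos hN
  rw [sum_Icc_range (fun n => (1 : ℝ) / n * a n)]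
  simp_rw [mul_sub]
  rw [Finset.sum_sub_distrib, ← Finset.sum_mul, hH]
  field_simp
  ring

lemma ratio_tendsto :
    Tendsto (fun k : ℕ => HH (2 ^ ((k + 1) ^ 2)) / HH (2 ^ (k ^ 2))) atTop (𝓝 1) := by
  have hl : 0 < Real.log 2 := Real.log_pos (by norm_num)
  have hinv : Tendsto (fun k : ℕ => ((k : ℝ))⁻¹) atTop (𝓝 0) :=
    tendsto_inv_atTop_nhds_zero_nat
  have hup : Tendsto (fun k : ℕ => ((k : ℝ)⁻¹) ^ 2 / Real.log 2 + (1 + (k : ℝ)⁻¹) ^ 2) atTop (𝓝 1) := by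
    have := ((hinv.pow 2).div_const (Real.log 2)).add ((hinv.const_add 1).pow 2)
    simpa using this
  refine tendsto_of_tendsto_of_tendsto_of_le_of_le' tendsto_const_nhds hup ?_ ?_
  · filter_upwards with k
    rw [le_div_iff₀ (HH_pos Nat.one_le_two_pow), one_mul]
    apply HH_mono
    gcongr <;> omega
  · filter_upwards [eventually_ge_atTop 1] with k hk
    have hk' : (0 : ℝ) < k := by exact_mod_cast hk
    calc HH (2 ^ ((k + 1) ^ 2)) / HH (2 ^ (k ^ 2))
        ≤ (1 + ((k + 1 : ℕ) : ℝ) ^ 2 * Real.log 2) / ((k : ℝ) ^ 2 * Real.log 2) := by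
          have h1 := HH_upper (k + 1)
          have h2 := HH_lower k
          have h3 := HH_nonneg (2 ^ ((k + 1) ^ 2))
          apply div_le_div₀ (by positivity) h1 (by positivity) h2
      _ = _ := by
          push_cast
          field_simp

lemma interp (R : ℕ → ℝ) (hR : Monotone R) (hR0 : ∀ N, 0 ≤ R N) (m : ℝ)
    (h : Tendsto (fun k : ℕ => R (2 ^ (k ^ 2)) / HH (2 ^ (k ^ 2))) atTop (𝓝 m)) :
    Tendsto (fun N => R N / HH N) atTop (𝓝 m) := by
  have hk : Tendsto (fun N : ℕ => Nat.sqrt (Nat.log 2 N)) atTop atTop := by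
    refine tendsto_atTop_mono' atTop (f₁ := fun N : ℕ => Nat.sqrt (Nat.log 2 N)) (Eventually.of_forall fun _ => le_rfl) ?_
    refine tendsto_atTop.2 fun b => ?_
    filter_upwards [eventually_ge_atTop (2 ^ (b ^ 2))] with N hN
    rw [Nat.le_sqrt']
    apply Nat.le_log_of_pow_le (by norm_num) hN
  have hup := ((h.comp (tendsto_add_atTop_nat 1)).mul ratio_tendsto).comp hk
  have hlo := (h.div ratio_tendsto one_ne_zero).comp hk
  rw [mul_one] at hup
  rw [div_one] at hlo
  have hb : ∀ N, 1 ≤ N → 2 ^ (Nat.sqrt (Nat.log 2 N) ^ 2) ≤ N ∧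
      N ≤ 2 ^ ((Nat.sqrt (Nat.log 2 N) + 1) ^ 2) := fun N hN => by
    constructor
    · exact (Nat.pow_le_pow_right (by norm_num) (Nat.sqrt_le' _)).trans
        (Nat.pow_log_le_self 2 (by omega))
    · have h1 := Nat.lt_pow_succ_log_self (b := 2) (by norm_num) N
      have h2 := Nat.lt_succ_sqrt' (Nat.log 2 N)
      exact h1.le.trans (Nat.pow_le_pow_right (by norm_num) h2)
  refine tendsto_of_tendsto_of_tendsto_of_le_of_le' hlo hup ?_ ?_
  · filter_upwards [eventually_ge_atTop 1] with N hN
    obtain ⟨h1, h2⟩ := hb N hN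
    set k := Nat.sqrt (Nat.log 2 N)
    have p1 := HH_pos (N := 2 ^ (k ^ 2)) Nat.one_le_two_pow
    have p2 := HH_pos (N := 2 ^ ((k + 1) ^ 2)) Nat.one_le_two_pow
    simp only [Function.comp, Pi.div_apply]
    change R (2 ^ (k ^ 2)) / HH (2 ^ (k ^ 2)) / (HH (2 ^ ((k + 1) ^ 2)) / HH (2 ^ (k ^ 2))) ≤ _
    calc _ = R (2 ^ (k ^ 2)) / HH (2 ^ ((k + 1) ^ 2)) := by field_simp
      _ ≤ _ := div_le_div₀ (hR0 _) (hR h1) (HH_pos hN) (HH_mono h2)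
  · filter_upwards [eventually_ge_atTop 1] with N hN
    obtain ⟨h1, h2⟩ := hb N hN
    set k := Nat.sqrt (Nat.log 2 N)
    have p1 := HH_pos (N := 2 ^ (k ^ 2)) Nat.one_le_two_pow
    have p2 := HH_pos (N := 2 ^ ((k + 1) ^ 2)) Nat.one_le_two_pow
    simp only [Function.comp]
    change _ ≤ R (2 ^ ((k + 1) ^ 2)) / HH (2 ^ ((k + 1) ^ 2)) * (HH (2 ^ ((k + 1) ^ 2)) / HH (2 ^ (k ^ 2)))
    calc _ ≤ R (2 ^ ((k + 1) ^ 2)) / HH (2 ^ (k ^ 2)) :=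
          div_le_div₀ (hR0 _) (hR h2) p1 (HH_mono h1)
      _ = _ := by field_simp

lemma tail_step (n : ℕ) (hn : 1 ≤ n) :
    (1 : ℝ) / n * (1 / Real.sqrt n) ≤ 4 * (1 / Real.sqrt n - 1 / Real.sqrt (n + 1 : ℕ)) := by
  have hn' : (1 : ℝ) ≤ n := by exact_mod_cast hn
  push_cast
  set s := Real.sqrt n with hs
  set t := Real.sqrt ((n : ℝ) + 1) with ht
  have hs2 : s ^ 2 = n := Real.sq_sqrt (by positivity)
  have ht2 : t ^ 2 = n + 1 := Real.sq_sqrt (by positivity)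
  have hs0 : 0 < s := Real.sqrt_pos.2 (by positivity)
  have ht0 : 0 < t := Real.sqrt_pos.2 (by positivity)
  have hst : s ≤ t := Real.sqrt_le_sqrt (by linarith)
  have e1 : 1 / s - 1 / t = 1 / (s * t * (s + t)) := by
    have : (t - s) * (s + t) = 1 := by nlinarith
    field_simp
    nlinarith
  rw [e1, ← hs2]
  have key : t * (s + t) ≤ 4 * s ^ 2 := by nlinarith [sq_nonneg (t - s)]
  calc 1 / s ^ 2 * (1 / s) = 4 * (1 / (s * (4 * s ^ 2))) := by field_simp
    _ ≤ 4 * (1 / (s * (t * (s + t)))) := by gcongr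
    _ = _ := by ring_nf

lemma tail_sum (i N : ℕ) (h : i ≤ N) :
    ∑ n ∈ Finset.Ico (i + 1) (N + 1), (1 : ℝ) / n * (1 / Real.sqrt n) ≤
      4 * (1 / Real.sqrt (i + 1 : ℕ) - 1 / Real.sqrt (N + 1 : ℕ)) := by
  induction N, h using Nat.le_induction with
  | base => simp
  | succ N hN ih =>
    rw [Finset.sum_Ico_succ_top (by omega)]
    have := tail_step (N + 1) (by omega)
    linarith

/-! ### Quantile coupling -/

open ProbabilityTheory in
def quant (ν : Measure ℝ) (u : ℝ) : ℝ := sInf {x | u ≤ cdf ν x}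

open ProbabilityTheory in
lemma quant_le_iff (ν : Measure ℝ) {u : ℝ} (hu : u ∈ Set.Ioo (0 : ℝ) 1) (x : ℝ) :
    quant ν u ≤ x ↔ u ≤ cdf ν x := by
  have hbdd : BddBelow {x | u ≤ cdf ν x} := by
    obtain ⟨b, hb⟩ := ((tendsto_cdf_atBot ν).eventually (gt_mem_nhds hu.1)).exists
    refine ⟨b, fun y hy => ?_⟩
    by_contra hlt
    have := monotone_cdf ν (not_le.1 hlt).le
    exact absurd (hy : u ≤ cdf ν y) (not_le.2 (this.trans_lt hb))
  have hne : {x | u ≤ cdf ν x}.Nonempty := by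
    obtain ⟨b, hb⟩ := ((tendsto_cdf_atTop ν).eventually (lt_mem_nhds hu.2)).exists
    exact ⟨b, hb.le⟩
  constructor
  · intro h
    have hgt : ∀ y, x < y → u ≤ cdf ν y := fun y hy => by
      obtain ⟨z, hz, hzy⟩ := exists_lt_of_csInf_lt hne (h.trans_lt hy)
      exact le_trans hz (monotone_cdf ν hzy.le)
    have hc : Tendsto (cdf ν) (𝓝[>] x) (𝓝 (cdf ν x)) :=
      ((cdf ν).right_continuous x).mono_left (nhdsWithin_mono _ Set.Ioi_subset_Ici_self)
    exact ge_of_tendsto hc (by filter_upwards [self_mem_nhdsWithin] with y hy using hgt y hy)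
  · intro h
    exact csInf_le hbdd h

def unif : Measure ℝ := volume.restrict (Set.Ioo (0 : ℝ) 1)

instance : IsProbabilityMeasure unif := ⟨by simp [unif]⟩

lemma quant_aemeas (ν : Measure ℝ) : AEMeasurable (quant ν) unif := by
  apply aemeasurable_restrict_of_monotoneOn measurableSet_Ioo
  intro a ha b hb hab
  rw [quant_le_iff ν ha]
  exact hab.trans ((quant_le_iff ν hb _).1 le_rfl)

open ProbabilityTheory in
lemma quant_map (ν : Measure ℝ) [IsProbabilityMeasure ν] : unif.map (quant ν) = ν := by
  have : IsProbabilityMeasure (unif.map (quant ν)) :=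
    Measure.isProbabilityMeasure_map (quant_aemeas ν)
  refine Measure.ext_of_Iic _ _ fun a => ?_
  rw [Measure.map_apply_of_aemeasurable (quant_aemeas ν) measurableSet_Iic, ← ofReal_cdf ν a]
  have h1 : unif (quant ν ⁻¹' Set.Iic a) = unif (Set.Iic (cdf ν a)) := by
    apply measure_congr
    have : ∀ᵐ u ∂unif, u ∈ Set.Ioo (0 : ℝ) 1 := ae_restrict_mem measurableSet_Ioo
    filter_upwards [this] with u hu
    exact propext (quant_le_iff ν hu a)
  rw [h1, unif, Measure.restrict_apply measurableSet_Iic]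
  have hc0 := cdf_nonneg ν a
  have hc1 := cdf_le_one ν a
  have h2 : volume (Set.Iic (cdf ν a) ∩ Set.Ioo 0 1) = volume (Set.Ioc (0 : ℝ) (cdf ν a)) := by
    apply le_antisymm
    · exact measure_mono fun x hx => ⟨hx.2.1, hx.1⟩
    · rw [Real.volume_Ioc, ← Real.volume_Ioo]
      exact measure_mono fun x hx => ⟨hx.2.le, hx.1, hx.2.trans_le hc1⟩
  rw [h2, Real.volume_Ioc, sub_zero]

/-- Ramp: `1` left of `q`, `0` right of `r`. -/
def ramp (q r : ℝ) (u : ℝ) : ℝ := max 0 (min 1 ((r - u) / (r - q)))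

lemma ramp_nonneg (q r u : ℝ) : 0 ≤ ramp q r u := le_max_left _ _

lemma ramp_le_one (q r u : ℝ) : ramp q r u ≤ 1 := max_le zero_le_one (min_le_left _ _)

lemma ramp_cont (q r : ℝ) : Continuous (ramp q r) := by
  unfold ramp; fun_prop

lemma ramp_lip {q r : ℝ} (h : q < r) (u v : ℝ) :
    |ramp q r u - ramp q r v| ≤ (1 / (r - q)) * |u - v| := by
  have hp : 0 < r - q := by linarith
  unfold ramp
  rw [max_comm 0, max_comm 0]
  refine (abs_max_sub_max_le_abs _ _ _).trans ?_
  · have h3 : ((r - u) / (r - q) - (r - v) / (r - q)) = (1 / (r - q)) * (v - u) := by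
      field_simp; ring
    have h2 : |min 1 ((r - u) / (r - q)) - min 1 ((r - v) / (r - q))| ≤
        |(r - u) / (r - q) - (r - v) / (r - q)| := by
      have := abs_min_sub_min_le_max 1 ((r - u) / (r - q)) 1 ((r - v) / (r - q))
      simpa using this
    rw [h3, abs_mul, abs_of_pos (show 0 < 1 / (r - q) by positivity), abs_sub_comm v u] at h2
    exact h2

lemma ramp_int (q r : ℝ) (ν : Measure ℝ) [IsProbabilityMeasure ν] : Integrable (ramp q r) ν :=
  Integrable.of_bound (ramp_cont q r).aestronglyMeasurable 1 (Eventually.of_forall fun u => by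
    rw [Real.norm_eq_abs, abs_of_nonneg (ramp_nonneg _ _ _)]; exact ramp_le_one _ _ _)

open ProbabilityTheory in
lemma cdf_le_ramp {q r : ℝ} (h : q < r) (ν : Measure ℝ) [IsProbabilityMeasure ν] :
    cdf ν q ≤ ∫ u, ramp q r u ∂ν := by
  rw [cdf_eq_real, ← integral_indicator_one measurableSet_Iic]
  refine integral_mono ((integrable_const (1 : ℝ)).indicator measurableSet_Iic) (ramp_int q r ν) fun u => ?_
  by_cases hu : u ∈ Set.Iic q
  · rw [Set.indicator_of_mem hu]
    unfold ramp
    have : 1 ≤ (r - u) / (r - q) := by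
      rw [le_div_iff₀ (by linarith)]; have := Set.mem_Iic.1 hu; linarith
    rw [min_eq_left this]; simp
  · rw [Set.indicator_of_notMem hu]; exact ramp_nonneg _ _ _

open ProbabilityTheory in
lemma ramp_le_cdf {q r : ℝ} (h : q < r) (ν : Measure ℝ) [IsProbabilityMeasure ν] :
    ∫ u, ramp q r u ∂ν ≤ cdf ν r := by
  rw [cdf_eq_real, ← integral_indicator_one measurableSet_Iic]
  refine integral_mono (ramp_int q r ν) ((integrable_const (1 : ℝ)).indicator measurableSet_Iic) fun u => ?_
  by_cases hu : u ∈ Set.Iic r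
  · rw [Set.indicator_of_mem hu]; exact ramp_le_one _ _ _
  · rw [Set.indicator_of_notMem hu]
    unfold ramp
    have : (r - u) / (r - q) ≤ 0 :=
      div_nonpos_of_nonpos_of_nonneg (by have := not_le.1 (fun h' => hu (Set.mem_Iic.2 h')); linarith) (by linarith)
    exact max_le le_rfl ((min_le_right _ _).trans this)

lemma W1_nonneg (ν ν' : Measure ℝ) : 0 ≤ W1 ν ν' := by
  apply Real.sInf_nonneg
  rintro r ⟨π, -, -, -, rfl⟩
  exact integral_nonneg fun _ => abs_nonneg _

lemma W1_le_quant (ν ν' : Measure ℝ) [IsProbabilityMeasure ν] [IsProbabilityMeasure ν'] :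
    W1 ν ν' ≤ ∫ u, |quant ν u - quant ν' u| ∂unif := by
  have hm : AEMeasurable (fun u => (quant ν u, quant ν' u)) unif :=
    (quant_aemeas ν).prodMk (quant_aemeas ν')
  apply csInf_le
  · refine ⟨0, ?_⟩
    rintro r ⟨π, -, -, -, rfl⟩
    exact integral_nonneg fun _ => abs_nonneg _
  · refine ⟨unif.map (fun u => (quant ν u, quant ν' u)),
      Measure.isProbabilityMeasure_map hm, ?_, ?_, ?_⟩
    · rw [AEMeasurable.map_map_of_aemeasurable measurable_fst.aemeasurable hm]
      exact quant_map ν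
    · rw [AEMeasurable.map_map_of_aemeasurable measurable_snd.aemeasurable hm]
      exact quant_map ν'
    · rw [integral_map hm]
      exact (by fun_prop : Continuous fun z : ℝ × ℝ => |z.1 - z.2|).aestronglyMeasurable

lemma scheffe (X : ℕ → ℝ → ℝ) (Y : ℝ → ℝ) (hX : ∀ N, Integrable (X N) unif)
    (hY : Integrable Y unif) (hae : ∀ᵐ u ∂unif, Tendsto (fun N => X N u) atTop (𝓝 (Y u)))
    (hn : Tendsto (fun N => ∫ u, |X N u| ∂unif) atTop (𝓝 (∫ u, |Y u| ∂unif))) :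
    Tendsto (fun N => ∫ u, |X N u - Y u| ∂unif) atTop (𝓝 0) := by
  have h1 : Tendsto (fun N => ∫ u, (|X N u| + |Y u| - |X N u - Y u|) ∂unif) atTop
      (𝓝 (∫ u, (|Y u| + |Y u|) ∂unif)) := by
    refine tendsto_integral_of_dominated_convergence (fun u => 2 * |Y u|) ?_ ?_ ?_ ?_
    · exact fun N => (((hX N).abs.add hY.abs).sub ((hX N).sub hY).abs).aestronglyMeasurable
    · exact hY.abs.const_mul 2
    · intro N
      filter_upwards with u
      rw [Real.norm_eq_abs, abs_le]
      constructor
      · have := abs_sub (X N u) (Y u); have := abs_nonneg (Y u); linarith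
      · have := abs_sub_abs_le_abs_sub (X N u) (Y u); linarith
    · filter_upwards [hae] with u hu
      have := (hu.abs.add_const |Y u|).sub (hu.sub_const (Y u)).abs
      simpa using this
  have h2 : ∀ N, ∫ u, |X N u - Y u| ∂unif = ∫ u, |X N u| ∂unif + ∫ u, |Y u| ∂unif
      - ∫ u, (|X N u| + |Y u| - |X N u - Y u|) ∂unif := fun N => by
    rw [integral_sub, integral_add (hX N).abs hY.abs]
    · ring
    · exact (hX N).abs.add hY.abs
    · exact ((hX N).sub hY).abs
  simp_rw [h2]
  have := (hn.add_const (∫ u, |Y u| ∂unif)).sub h1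
  rw [integral_add hY.abs hY.abs] at this
  simpa using this

open ProbabilityTheory in
lemma W1_tendsto (ν : ℕ → Measure ℝ) (G : Measure ℝ) [∀ N, IsProbabilityMeasure (ν N)]
    [IsProbabilityMeasure G] (hpos : ∀ a b : ℝ, a < b → cdf G a < cdf G b)
    (hνi : ∀ N, Integrable (fun u => u) (ν N)) (hGi : Integrable (fun u => u) G)
    (hr : ∀ q r : ℚ, q < r → Tendsto (fun N => ∫ u, ramp q r u ∂(ν N)) atTop
      (𝓝 (∫ u, ramp q r u ∂G)))
    (ha : Tendsto (fun N => ∫ u, |u| ∂(ν N)) atTop (𝓝 (∫ u, |u| ∂G))) :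
    Tendsto (fun N => W1 (ν N) G) atTop (𝓝 0) := by
  have hint : ∀ (κ : Measure ℝ) [IsProbabilityMeasure κ], Integrable (fun u => u) κ →
      Integrable (quant κ) unif := fun κ _ h => by
    have h' : Integrable (fun u => u) (unif.map (quant κ)) := by rwa [quant_map κ]
    exact h'.comp_aemeasurable (quant_aemeas κ)
  have habs : ∀ (κ : Measure ℝ) [IsProbabilityMeasure κ],
      ∫ u, |u| ∂κ = ∫ u, |quant κ u| ∂unif := fun κ _ => by
    conv_lhs => rw [← quant_map κ]
    rw [integral_map (quant_aemeas κ)]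
    exact continuous_abs.aestronglyMeasurable
  have hconv := scheffe (fun N => quant (ν N)) (quant G) (fun N => hint _ (hνi N)) (hint _ hGi)
    (by
      have : ∀ᵐ u ∂unif, u ∈ Set.Ioo (0 : ℝ) 1 := ae_restrict_mem measurableSet_Ioo
      filter_upwards [this] with u hu
      refine tendsto_order.2 ⟨fun x hx => ?_, fun x hx => ?_⟩
      · obtain ⟨r, hr1, hr2⟩ := exists_rat_btwn hx
        obtain ⟨q, hq1, hq2⟩ := exists_rat_btwn hr1
        have hlt : cdf G r < u := by
          rw [← not_le, ← quant_le_iff G hu, not_le]; exact hr2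
        have := (hr q r (by exact_mod_cast hq2)).eventually
          (gt_mem_nhds ((ramp_le_cdf hq2 G).trans_lt hlt))
        filter_upwards [this] with N hN
        refine hq1.trans ?_
        rw [← not_le, quant_le_iff _ hu, not_le]
        exact (cdf_le_ramp hq2 (ν N)).trans_lt hN
      · obtain ⟨r, hr1, hr2⟩ := exists_rat_btwn hx
        obtain ⟨q, hq1, hq2⟩ := exists_rat_btwn hr1
        have hlt : u < cdf G q :=
          ((quant_le_iff G hu _).1 le_rfl).trans_lt (hpos _ _ hq1)
        have := (hr q r (by exact_mod_cast hq2)).eventually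
          (lt_mem_nhds (hlt.trans_le (cdf_le_ramp hq2 G)))
        filter_upwards [this] with N hN
        refine lt_of_le_of_lt ?_ hr2
        rw [quant_le_iff _ hu]
        exact hN.le.trans (ramp_le_cdf hq2 (ν N)))
    (by simpa only [habs] using ha)
  exact squeeze_zero (fun N => W1_nonneg _ _) (fun N => W1_le_quant _ _) hconv

/-! ### Measurability, boundedness -/

lemma dtheta_nonneg {A : Type*} {θ : ℝ} (h0 : 0 < θ) (x y : ℕ → A) : 0 ≤ dtheta θ x y := by
  unfold dtheta; split_ifs <;> positivity

lemma dtheta_le_one {A : Type*} {θ : ℝ} (h0 : 0 < θ) (h1 : θ < 1) (x y : ℕ → A) :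
    dtheta θ x y ≤ 1 := by
  unfold dtheta; split_ifs
  · norm_num
  · exact pow_le_one₀ h0.le h1.le

lemma birk_succ' {A : Type*} (f : (ℕ → A) → ℝ) (n : ℕ) (x : ℕ → A) :
    birk f (n + 1) x = birk f n (shift x) + f x := by
  simp [birk, Finset.sum_range_succ']

section
variable {A : Type*} [MeasurableSpace A]

lemma f_aemeas (μ : Measure (ℕ → A)) [IsProbabilityMeasure μ]
    (hinv : MeasurePreserving shift μ μ) (f : (ℕ → A) → ℝ) (G : Measure ℝ) [IsProbabilityMeasure G]
    (hclt : ∀ gB : BoundedContinuousFunction ℝ ℝ,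
      Tendsto (fun n : ℕ => ∫ x, gB (birk f n x / Real.sqrt n) ∂μ) atTop
        (𝓝 (∫ u, gB u ∂G))) : AEMeasurable f μ := by
  have hb : ∀ u : ℝ, 2 - Real.pi / 2 ≤ Real.arctan u + 2 ∧ Real.arctan u + 2 ≤ 4 := fun u => by
    have h1 := Real.neg_pi_div_two_lt_arctan u
    have h2 := Real.arctan_lt_pi_div_two u
    have h3 := Real.pi_lt_four
    constructor <;> linarith
  have hpi : 0 < 2 - Real.pi / 2 := by have h3 := Real.pi_lt_four; linarith
  let gB : BoundedContinuousFunction ℝ ℝ := BoundedContinuousFunction.ofNormedAddCommGroup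
    (fun u => Real.arctan u + 2) (by fun_prop) 4 (fun u => by
      rw [Real.norm_eq_abs, abs_of_nonneg (by linarith [(hb u).1])]; exact (hb u).2)
  have hgB : ∀ u, gB u = Real.arctan u + 2 := fun u => rfl
  have hpos : 0 < ∫ u, gB u ∂G := by
    have : ∫ u, (2 - Real.pi / 2) ∂G ≤ ∫ u, gB u ∂G :=
      integral_mono (integrable_const _) (gB.integrable G) fun u => (hb u).1
    simp at this
    linarith
  have hev := (hclt gB).eventually (lt_mem_nhds hpos)
  have hS : ∀ᶠ n in atTop, AEMeasurable (birk f n) μ := by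
    filter_upwards [hev, eventually_ge_atTop 1] with n hn hn1
    have hi : Integrable (fun x => gB (birk f n x / Real.sqrt n)) μ := by
      by_contra hni
      rw [integral_undef hni] at hn
      exact lt_irrefl _ hn
    have hm := hi.aestronglyMeasurable.aemeasurable
    have ht : Measurable Real.tan := by
      have : Real.tan = fun x => Real.sin x / Real.cos x := funext Real.tan_eq_sin_div_cos
      rw [this]; fun_prop
    have h2 := ((ht.comp_aemeasurable (hm.sub_const 2))).mul_const (Real.sqrt n)
    refine h2.congr (Eventually.of_forall fun x => ?_)
    have : Real.sqrt n ≠ 0 := by positivity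
    simp only [Function.comp, hgB, add_sub_cancel_right, Real.tan_arctan]
    field_simp
  obtain ⟨n, hn⟩ := (hS.and ((tendsto_add_atTop_nat 1).eventually hS)).exists
  have h1 : AEMeasurable (fun x => birk f n (shift x)) μ :=
    hn.1.comp_quasiMeasurePreserving hinv.quasiMeasurePreserving
  refine (hn.2.sub h1).congr (Eventually.of_forall fun x => ?_)
  simp [birk_succ']

lemma iter_aemeas {μ : Measure (ℕ → A)}
    (hinv : MeasurePreserving shift μ μ) {f : (ℕ → A) → ℝ} (hf : AEMeasurable f μ) (i : ℕ) :
    AEMeasurable (fun x => f (shift^[i] x)) μ :=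
  hf.comp_quasiMeasurePreserving (hinv.iterate i).quasiMeasurePreserving

lemma birk_aemeas {μ : Measure (ℕ → A)}
    (hinv : MeasurePreserving shift μ μ) {f : (ℕ → A) → ℝ} (hf : AEMeasurable f μ) (n : ℕ) :
    AEMeasurable (birk f n) μ := by
  have : birk f n = fun x => ∑ i ∈ Finset.range n, f (shift^[i] x) := rfl
  rw [this]
  exact Finset.aemeasurable_fun_sum _ fun i _ => iter_aemeas hinv hf i

lemma birk_bound {f : (ℕ → A) → ℝ} {B : ℝ} (hB : ∀ x, |f x| ≤ B) (n : ℕ) (x : ℕ → A) :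
    |birk f n x| ≤ n * B := by
  refine (Finset.abs_sum_le_sum_abs _ _).trans ?_
  refine (Finset.sum_le_sum fun i _ => hB _).trans ?_
  simp

lemma comp_int {μ : Measure (ℕ → A)} [IsProbabilityMeasure μ]
    (hinv : MeasurePreserving shift μ μ) {f : (ℕ → A) → ℝ} (hf : AEMeasurable f μ)
    {B : ℝ} (hB : ∀ x, |f x| ≤ B) {g : ℝ → ℝ} (hg : Continuous g) (n : ℕ) :
    Integrable (fun x => g (birk f n x / Real.sqrt n)) μ := by
  obtain ⟨D, hD⟩ := (isCompact_Icc (a := -(n * B / Real.sqrt n)) (b := n * B / Real.sqrt n)).exists_bound_of_continuousOn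
    hg.continuousOn
  refine Integrable.of_bound
    (hg.measurable.comp_aemeasurable ((birk_aemeas hinv hf n).div_const _)).aestronglyMeasurable D
    (Eventually.of_forall fun x => hD _ ?_)
  rw [Set.mem_Icc, ← abs_le, abs_div, abs_of_nonneg (Real.sqrt_nonneg _)]
  exact div_le_div_of_nonneg_right (birk_bound hB n x) (Real.sqrt_nonneg _)

/-- The log-averaged functional. -/
def KN (f : (ℕ → A) → ℝ) (g : ℝ → ℝ) (N : ℕ) (X : Fin N → (ℕ → A)) : ℝ :=
  (∑ n ∈ Finset.Icc 1 N,
    (1 : ℝ) / n * g ((∑ j : Fin N, if (j : ℕ) < n then f (X j) else 0) / Real.sqrt n)) / HH N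

/-- The log-averaged functional along the orbit. -/
def RN (f : (ℕ → A) → ℝ) (g : ℝ → ℝ) (N : ℕ) (x : ℕ → A) : ℝ :=
  ∑ n ∈ Finset.Icc 1 N, (1 : ℝ) / n * g (birk f n x / Real.sqrt n)

lemma KN_orbit (f : (ℕ → A) → ℝ) (g : ℝ → ℝ) (N : ℕ) (x : ℕ → A) :
    KN f g N (fun i => shift^[(i : ℕ)] x) = RN f g N x / HH N := by
  unfold KN RN
  congr 1
  refine Finset.sum_congr rfl fun n hn => ?_
  have hn := Finset.mem_Icc.1 hn
  congr 3
  rw [Fin.sum_univ_eq_sum_range (fun j => if j < n then f (shift^[j] x) else 0) N,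
    ← Finset.sum_filter]
  unfold birk
  congr 1
  ext j
  simp
  omega

lemma KN_lip {θ : ℝ} (hθ0 : 0 < θ) {f : (ℕ → A) → ℝ} {L : ℝ} (hL : 0 ≤ L)
    (hf : ∀ x y, |f x - f y| ≤ L * dtheta θ x y) {g : ℝ → ℝ} {c : ℝ} (hc : 0 ≤ c)
    (hg : ∀ u v, |g u - g v| ≤ c * |u - v|) {N : ℕ} (hN : 1 ≤ N) :
    SepLip θ (KN f g N) (fun i => 4 * c * L / HH N * (1 / Real.sqrt ((i : ℕ) + 1 : ℕ))) := by
  intro X i x'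
  have hH := HH_pos hN
  have hd := dtheta_nonneg hθ0 (X i) x'
  set d := dtheta θ (X i) x'
  unfold KN
  rw [← sub_div, ← Finset.sum_sub_distrib, abs_div, abs_of_pos hH]
  have hs : ∀ n : ℕ, |(∑ j : Fin N, if (j : ℕ) < n then f (X j) else 0)
      - (∑ j : Fin N, if (j : ℕ) < n then f (Function.update X i x' j) else 0)| ≤
      if (i : ℕ) < n then L * d else 0 := fun n => by
    rw [← Finset.sum_sub_distrib, Finset.sum_eq_single i]
    · simp only [Function.update_self]
      split_ifs
      · exact hf _ _
      · simp
    · intro j _ hj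
      simp [Function.update_of_ne hj]
    · simp
  have hterm : ∀ n ∈ Finset.Icc 1 N,
      |(1 : ℝ) / n * g ((∑ j : Fin N, if (j : ℕ) < n then f (X j) else 0) / Real.sqrt n) -
      (1 : ℝ) / n * g ((∑ j : Fin N, if (j : ℕ) < n then f (Function.update X i x' j) else 0)
        / Real.sqrt n)| ≤
      if (i : ℕ) < n then c * L * d * ((1 : ℝ) / n * (1 / Real.sqrt n)) else 0 := fun n hn => by
    rw [← mul_sub, abs_mul, abs_of_nonneg (by positivity : (0 : ℝ) ≤ 1 / n)]
    have h1 := hg ((∑ j : Fin N, if (j : ℕ) < n then f (X j) else 0) / Real.sqrt n)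
      ((∑ j : Fin N, if (j : ℕ) < n then f (Function.update X i x' j) else 0) / Real.sqrt n)
    rw [← sub_div, abs_div, abs_of_nonneg (Real.sqrt_nonneg _)] at h1
    have h2 := hs n
    calc _ ≤ (1 : ℝ) / n * (c * ((if (i : ℕ) < n then L * d else 0) / Real.sqrt n)) := by
          refine mul_le_mul_of_nonneg_left (h1.trans ?_) (by positivity)
          gcongr
      _ = _ := by
          split_ifs
          · ring
          · simp
  refine (div_le_div_of_nonneg_right ((Finset.abs_sum_le_sum_abs _ _).trans
    (Finset.sum_le_sum hterm)) hH.le).trans ?_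
  rw [← Finset.sum_filter, ← Finset.mul_sum]
  have hset : (Finset.Icc 1 N).filter (fun n => (i : ℕ) < n) = Finset.Ico ((i : ℕ) + 1) (N + 1) := by
    ext n; simp; omega
  rw [hset]
  have ht := tail_sum i N i.2.le
  have ht' : ∑ n ∈ Finset.Ico ((i : ℕ) + 1) (N + 1), (1 : ℝ) / n * (1 / Real.sqrt n) ≤
      4 * (1 / Real.sqrt ((i : ℕ) + 1 : ℕ)) := by
    have : 0 ≤ 1 / Real.sqrt (N + 1 : ℕ) := by positivity
    linarith
  calc _ ≤ c * L * d * (4 * (1 / Real.sqrt ((i : ℕ) + 1 : ℕ))) / HH N := by gcongr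
    _ = _ := by ring

lemma KN_lip_sum (a : ℝ) {N : ℕ} (hN : 1 ≤ N) :
    ∑ i : Fin N, (a / HH N * (1 / Real.sqrt ((i : ℕ) + 1 : ℕ))) ^ 2 = a ^ 2 / HH N := by
  have hH := HH_pos hN
  rw [Fin.sum_univ_eq_sum_range (fun i => (a / HH N * (1 / Real.sqrt (i + 1 : ℕ))) ^ 2) N]
  have : ∀ i : ℕ, (a / HH N * (1 / Real.sqrt (i + 1 : ℕ))) ^ 2 =
      (a / HH N) ^ 2 * (1 / (i + 1 : ℕ)) := fun i => by
    rw [mul_pow, div_pow 1, Real.sq_sqrt (by positivity), one_pow]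
  simp_rw [this]
  rw [← Finset.mul_sum, ← sum_Icc_range (fun n => (1 : ℝ) / n)]
  change (a / HH N) ^ 2 * HH N = _
  field_simp

lemma as_conv {θ : ℝ} (hθ0 : 0 < θ)
    (μ : Measure (ℕ → A)) [IsProbabilityMeasure μ]
    (hinv : MeasurePreserving shift μ μ) (C : ℝ) (hC : 0 < C)
    (hvar : ∀ (n : ℕ), 1 ≤ n → ∀ (K : (Fin n → (ℕ → A)) → ℝ) (ℓ : Fin n → ℝ),
      SepLip θ K ℓ →
      ∫ x, (K (fun i => shift^[(i : ℕ)] x) - ∫ y, K (fun i => shift^[(i : ℕ)] y) ∂μ) ^ 2 ∂μ ≤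
        C * ∑ i, ℓ i ^ 2)
    {f : (ℕ → A) → ℝ} {L : ℝ} (hL : 0 ≤ L) (hf : ∀ x y, |f x - f y| ≤ L * dtheta θ x y)
    (hfm : AEMeasurable f μ) {B : ℝ} (hB : ∀ x, |f x| ≤ B)
    {g : ℝ → ℝ} {c : ℝ} (hc : 0 ≤ c) (hg : ∀ u v, |g u - g v| ≤ c * |u - v|)
    (hgc : Continuous g) (hg0 : ∀ u, 0 ≤ g u) (m : ℝ)
    (hm : Tendsto (fun n : ℕ => ∫ x, g (birk f n x / Real.sqrt n) ∂μ) atTop (𝓝 m)) :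
    ∀ᵐ x ∂μ, Tendsto (fun N => RN f g N x / HH N) atTop (𝓝 m) := by
  -- bounded functionals
  have hRi : ∀ N, Integrable (RN f g N) μ := fun N => by
    have : RN f g N = fun x => ∑ n ∈ Finset.Icc 1 N, (1 : ℝ) / n * g (birk f n x / Real.sqrt n) := rfl
    rw [this]
    exact integrable_finsetSum _ fun n _ => (comp_int hinv hfm hB hgc n).const_mul _
  let e : ℕ → ℝ := fun N => ∫ x, RN f g N x / HH N ∂μ
  have he : Tendsto e atTop (𝓝 m) := by
    refine (log_cesaro _ m hm).congr fun N => ?_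
    simp only [e]
    rw [integral_div]
    congr 1
    unfold RN
    rw [integral_finsetSum _ fun n _ => (comp_int hinv hfm hB hgc n).const_mul _]
    exact Finset.sum_congr rfl fun n _ => (integral_const_mul _ _).symm
  have hV : ∀ N, 1 ≤ N → ∫ x, (RN f g N x / HH N - e N) ^ 2 ∂μ ≤ C * ((4 * c * L) ^ 2 / HH N) := by
    intro N hN
    have := hvar N hN _ _ (KN_lip hθ0 hL hf hc hg hN)
    simp_rw [KN_orbit] at this
    rwa [KN_lip_sum _ hN] at this
  have hgbd : ∀ n : ℕ, ∃ D : ℝ, ∀ x, |g (birk f n x / Real.sqrt n)| ≤ D := fun n => by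
    obtain ⟨D, hD⟩ := (isCompact_Icc (a := -(n * B / Real.sqrt n))
      (b := n * B / Real.sqrt n)).exists_bound_of_continuousOn hgc.continuousOn
    refine ⟨D, fun x => hD _ ?_⟩
    rw [Set.mem_Icc, ← abs_le, abs_div, abs_of_nonneg (Real.sqrt_nonneg _)]
    exact div_le_div_of_nonneg_right (birk_bound hB n x) (Real.sqrt_nonneg _)
  choose D hD using hgbd
  have hsqi : ∀ N, Integrable (fun x => (RN f g N x / HH N - e N) ^ 2) μ := fun N => by
    have hmeas : AEMeasurable (fun x => (RN f g N x / HH N - e N) ^ 2) μ :=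
      (((hRi N).aestronglyMeasurable.aemeasurable.div_const _).sub_const _).pow_const 2
    refine Integrable.of_bound hmeas.aestronglyMeasurable
      ((((∑ n ∈ Finset.Icc 1 N, (1 : ℝ) / n * D n) / HH N) + |e N|) ^ 2)
      (Eventually.of_forall fun x => ?_)
    rw [Real.norm_eq_abs, abs_pow]
    have h1 : |RN f g N x| ≤ ∑ n ∈ Finset.Icc 1 N, (1 : ℝ) / n * D n := by
      refine (Finset.abs_sum_le_sum_abs _ _).trans (Finset.sum_le_sum fun n _ => ?_)
      rw [abs_mul, abs_of_nonneg (by positivity : (0 : ℝ) ≤ 1 / n)]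
      exact mul_le_mul_of_nonneg_left (hD n x) (by positivity)
    have h2 : |RN f g N x / HH N - e N| ≤ (∑ n ∈ Finset.Icc 1 N, (1 : ℝ) / n * D n) / HH N + |e N| := by
      refine (abs_sub _ _).trans ?_
      rw [abs_div, abs_of_nonneg (HH_nonneg N)]
      have := div_le_div_of_nonneg_right h1 (HH_nonneg N)
      linarith
    exact pow_le_pow_left₀ (abs_nonneg _) h2 2
  have hl : 0 < Real.log 2 := Real.log_pos (by norm_num)
  let F : ℕ → (ℕ → A) → ℝ := fun k x => (RN f g (2 ^ (k ^ 2)) x / HH (2 ^ (k ^ 2)) - e (2 ^ (k ^ 2))) ^ 2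
  have hFsum : Summable fun k => ∫ x, F k x ∂μ := by
    rw [← summable_nat_add_iff 1]
    have hs : Summable fun k : ℕ => (C * (4 * c * L) ^ 2 / Real.log 2) * (1 / ((k + 1 : ℕ) : ℝ) ^ 2) :=
      (((summable_nat_add_iff 1).2 (Real.summable_one_div_nat_pow.2 (by norm_num : 1 < 2)))).mul_left _
    refine Summable.of_nonneg_of_le (fun k => integral_nonneg fun x => sq_nonneg _) (fun k => ?_) hs
    refine (hV (2 ^ ((k + 1) ^ 2)) Nat.one_le_two_pow).trans ?_
    have h1 := HH_lower (k + 1)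
    calc C * ((4 * c * L) ^ 2 / HH (2 ^ ((k + 1) ^ 2)))
        ≤ C * ((4 * c * L) ^ 2 / (((k + 1 : ℕ) : ℝ) ^ 2 * Real.log 2)) := by
          gcongr
      _ = _ := by field_simp
  have hlin : ∫⁻ x, ∑' k, ENNReal.ofReal (F k x) ∂μ ≠ ⊤ := by
    rw [lintegral_tsum fun k => (hsqi _).aestronglyMeasurable.aemeasurable.ennreal_ofReal]
    have : ∀ k, ∫⁻ x, ENNReal.ofReal (F k x) ∂μ = ENNReal.ofReal (∫ x, F k x ∂μ) := fun k =>
      (ofReal_integral_eq_lintegral_ofReal (hsqi _) (Eventually.of_forall fun x => sq_nonneg _)).symm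
    exact fun h => hFsum.tsum_ofReal_ne_top ((tsum_congr this).symm.trans h)
  have hae := ae_lt_top' (AEMeasurable.tsum fun k =>
    (hsqi (2 ^ (k ^ 2))).aestronglyMeasurable.aemeasurable.ennreal_ofReal) hlin
  filter_upwards [hae] with x hx
  have h0 := ENNReal.tendsto_atTop_zero_of_tsum_ne_top hx.ne
  have h1 : Tendsto (fun k => F k x) atTop (𝓝 0) := by
    have := (ENNReal.tendsto_toReal ENNReal.zero_ne_top).comp h0
    refine (this.congr fun k => ?_)
    exact ENNReal.toReal_ofReal (sq_nonneg _)
  have h2 : Tendsto (fun k => RN f g (2 ^ (k ^ 2)) x / HH (2 ^ (k ^ 2)) - e (2 ^ (k ^ 2)))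
      atTop (𝓝 0) := by
    have h3 := h1.sqrt
    rw [Real.sqrt_zero] at h3
    refine (tendsto_zero_iff_abs_tendsto_zero _).2 (h3.congr fun k => ?_)
    exact Real.sqrt_sq_eq_abs _
  have hsub : Tendsto (fun k : ℕ => 2 ^ (k ^ 2)) atTop atTop :=
    tendsto_atTop_mono (fun k => (Nat.le_self_pow (by norm_num) k).trans (Nat.lt_two_pow_self).le) tendsto_id
  have h4 := h2.add (he.comp hsub)
  refine interp (fun N => RN f g N x) ?_ ?_ m ?_
  · intro a b hab
    exact Finset.sum_le_sum_of_subset_of_nonneg (Finset.Icc_subset_Icc_right hab)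
      fun n _ _ => mul_nonneg (by positivity) (hg0 _)
  · exact fun N => Finset.sum_nonneg fun n _ => mul_nonneg (by positivity) (hg0 _)
  · simpa using h4

end

/-! ### First moment convergence -/

lemma trunc_bound {X : Type*} [MeasurableSpace X] (κ : Measure X) (Y : X → ℝ)
    (h1 : Integrable (fun x => |Y x|) κ) (h2 : Integrable (fun x => Y x ^ 2) κ)
    {M : ℝ} (hM : 0 < M) (h3 : Integrable (fun x => min |Y x| M) κ) {V : ℝ}
    (hV : ∫ x, Y x ^ 2 ∂κ ≤ V) :
    |∫ x, |Y x| ∂κ - ∫ x, min |Y x| M ∂κ| ≤ V / M := by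
  rw [← integral_sub h1 h3, abs_of_nonneg
    (integral_nonneg fun x => sub_nonneg.2 (min_le_left _ _))]
  calc _ ≤ ∫ x, Y x ^ 2 / M ∂κ := by
        refine integral_mono (h1.sub h3) (h2.div_const M) fun x => ?_
        simp only
        rw [le_div_iff₀ hM, ← sq_abs]
        have h0 := abs_nonneg (Y x)
        rcases le_total |Y x| M with h | h
        · rw [min_eq_left h]; nlinarith
        · rw [min_eq_right h]; nlinarith
    _ = (∫ x, Y x ^ 2 ∂κ) / M := integral_div _ _
    _ ≤ V / M := by gcongr

section
variable {A : Type*} [MeasurableSpace A]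

lemma second_moment {θ : ℝ} (hθ0 : 0 < θ)
    (μ : Measure (ℕ → A)) [IsProbabilityMeasure μ]
    (hinv : MeasurePreserving shift μ μ) (C : ℝ) (hC : 0 < C)
    (hvar : ∀ (n : ℕ), 1 ≤ n → ∀ (K : (Fin n → (ℕ → A)) → ℝ) (ℓ : Fin n → ℝ),
      SepLip θ K ℓ →
      ∫ x, (K (fun i => shift^[(i : ℕ)] x) - ∫ y, K (fun i => shift^[(i : ℕ)] y) ∂μ) ^ 2 ∂μ ≤
        C * ∑ i, ℓ i ^ 2)
    {f : (ℕ → A) → ℝ} {L : ℝ} (hf : ∀ x y, |f x - f y| ≤ L * dtheta θ x y)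
    (hfm : AEMeasurable f μ) {B : ℝ} (hB : ∀ x, |f x| ≤ B) (hf0 : ∫ x, f x ∂μ = 0) (n : ℕ) :
    ∫ x, (birk f n x / Real.sqrt n) ^ 2 ∂μ ≤ C * L ^ 2 := by
  rcases Nat.eq_zero_or_pos n with rfl | hn
  · simp; positivity
  have hfi : ∀ i, Integrable (fun x => f (shift^[i] x)) μ := fun i =>
    Integrable.of_bound (iter_aemeas hinv hfm i).aestronglyMeasurable B
      (Eventually.of_forall fun x => hB _)
  have hmean : ∫ x, birk f n x ∂μ = 0 := by
    unfold birk
    rw [integral_finsetSum _ fun i _ => hfi i]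
    refine Finset.sum_eq_zero fun i _ => ?_
    have hi := hinv.iterate i
    have := integral_map (f := f) hi.measurable.aemeasurable
      (by rw [hi.map_eq]; exact hfm.aestronglyMeasurable)
    rw [hi.map_eq, hf0] at this
    exact this.symm
  have hK : SepLip θ (fun X : Fin n → (ℕ → A) => ∑ j, f (X j)) (fun _ => L) := by
    intro X i x'
    simp only
    rw [← Finset.sum_sub_distrib, Finset.sum_eq_single i]
    · simp only [Function.update_self]; exact hf _ _
    · intro j _ hj
      simp [Function.update_of_ne hj]
    · simp
  have hb : ∀ x : ℕ → A, ∑ j : Fin n, f (shift^[(j : ℕ)] x) = birk f n x := fun x =>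
    Fin.sum_univ_eq_sum_range (fun j => f (shift^[j] x)) n
  have h := hvar n hn _ _ hK
  simp only [hb, hmean, sub_zero, Finset.sum_const, Finset.card_univ, Fintype.card_fin,
    nsmul_eq_mul] at h
  have hn' : (0 : ℝ) < n := by exact_mod_cast hn
  simp_rw [div_pow, Real.sq_sqrt hn'.le]
  rw [integral_div, div_le_iff₀ hn']
  linarith

lemma abs_moment_tendsto
    (μ : Measure (ℕ → A)) [IsProbabilityMeasure μ]
    (hinv : MeasurePreserving shift μ μ)
    {f : (ℕ → A) → ℝ} (hfm : AEMeasurable f μ) {B : ℝ} (hB : ∀ x, |f x| ≤ B) {V : ℝ}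
    (hV : ∀ n : ℕ, ∫ x, (birk f n x / Real.sqrt n) ^ 2 ∂μ ≤ V)
    (G : Measure ℝ) [IsProbabilityMeasure G] (hG1 : Integrable (fun u => u) G)
    (hG2 : Integrable (fun u => u ^ 2) G)
    (hclt : ∀ gB : BoundedContinuousFunction ℝ ℝ,
      Tendsto (fun n : ℕ => ∫ x, gB (birk f n x / Real.sqrt n) ∂μ) atTop
        (𝓝 (∫ u, gB u ∂G))) :
    Tendsto (fun n : ℕ => ∫ x, |birk f n x / Real.sqrt n| ∂μ) atTop (𝓝 (∫ u, |u| ∂G)) := by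
  set W := max V (∫ u, u ^ 2 ∂G) with hW
  have hW0 : 0 ≤ W := (integral_nonneg fun u => sq_nonneg _).trans (le_max_right _ _)
  rw [Metric.tendsto_atTop]
  intro ε hε
  obtain ⟨M, hM0, hM⟩ : ∃ M : ℝ, 0 < M ∧ W / M < ε / 3 := by
    refine ⟨3 * (W + 1) / ε, by positivity, ?_⟩
    rw [div_lt_iff₀ (by positivity)]
    field_simp
    linarith
  have hmb : ∀ u : ℝ, |min |u| M| ≤ M := fun u => by
    rw [abs_of_nonneg (le_min (abs_nonneg _) hM0.le)]; exact min_le_right _ _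
  have hmc : Continuous fun u : ℝ => min |u| M := by fun_prop
  let gB : BoundedContinuousFunction ℝ ℝ := BoundedContinuousFunction.ofNormedAddCommGroup
    (fun u => min |u| M) hmc M hmb
  have hc := hclt gB
  change Tendsto (fun n : ℕ => ∫ x, min |birk f n x / Real.sqrt n| M ∂μ) atTop
    (𝓝 (∫ u, min |u| M ∂G)) at hc
  obtain ⟨n0, hn0⟩ := (Metric.tendsto_atTop.1 hc) (ε / 3) (by positivity)
  refine ⟨n0, fun n hn => ?_⟩
  have e1 := hn0 n hn
  have e2 := trunc_bound μ (fun x => birk f n x / Real.sqrt n)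
    (comp_int hinv hfm hB continuous_abs n) (comp_int hinv hfm hB (continuous_pow 2) n) hM0
    (comp_int hinv hfm hB hmc n) ((hV n).trans (le_max_left V (∫ u, u ^ 2 ∂G)))
  have e3 := trunc_bound G (fun u => u) hG1.abs hG2 hM0 (gB.integrable G)
    (le_max_right V (∫ u, u ^ 2 ∂G))
  rw [← hW] at e2 e3
  rw [Real.dist_eq] at *
  rw [abs_lt] at *
  rw [abs_le] at e2 e3
  constructor <;> linarith

/-! ### The empirical measures -/

lemma AN_int (f : (ℕ → A) → ℝ) (x : ℕ → A) {N : ℕ} (hN : 1 ≤ N) (g : ℝ → ℝ) :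
    Integrable g (ANmeas f x N) := by
  have hH : 0 < ∑ n ∈ Finset.Icc 1 N, (1 : ℝ) / n := HH_pos hN
  unfold ANmeas
  refine Integrable.smul_measure ?_ (ENNReal.inv_ne_top.2 (ENNReal.ofReal_pos.2 hH).ne')
  rw [integrable_finsetSum_measure]
  intro n _
  exact (integrable_dirac (by simp)).smul_measure (by simp)

lemma AN_integral (f : (ℕ → A) → ℝ) (x : ℕ → A) {N : ℕ} (hN : 1 ≤ N) (g : ℝ → ℝ) :
    ∫ u, g u ∂(ANmeas f x N) = RN f g N x / HH N := by
  unfold ANmeas RN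
  change ∫ u, g u ∂((ENNReal.ofReal (HH N))⁻¹ • _) = _
  rw [integral_smul_measure, integral_finsetSum_measure
    fun n _ => (integrable_dirac (by simp)).smul_measure (by simp)]
  simp_rw [integral_smul_measure, integral_dirac]
  rw [ENNReal.toReal_inv, ENNReal.toReal_ofReal (HH_nonneg N), smul_eq_mul, inv_mul_eq_div]
  congr 1
  refine Finset.sum_congr rfl fun n _ => ?_
  rw [ENNReal.toReal_ofReal (by positivity), smul_eq_mul]

lemma AN_prob (f : (ℕ → A) → ℝ) (x : ℕ → A) {N : ℕ} (hN : 1 ≤ N) :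
    IsProbabilityMeasure (ANmeas f x N) := by
  have hH : 0 < ∑ n ∈ Finset.Icc 1 N, (1 : ℝ) / n := HH_pos hN
  constructor
  unfold ANmeas
  rw [Measure.smul_apply, Measure.finsetSum_apply]
  simp only [Measure.smul_apply, measure_univ, smul_eq_mul, mul_one]
  rw [← ENNReal.ofReal_sum_of_nonneg fun n _ => by positivity]
  exact ENNReal.inv_mul_cancel (by simpa using hH) ENNReal.ofReal_ne_top

end

open ProbabilityTheory in
lemma gauss_cdf_strict {v : ℝ≥0} (hv : v ≠ 0) (a b : ℝ) (h : a < b) :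
    cdf (gaussianReal 0 v) a < cdf (gaussianReal 0 v) b := by
  rw [cdf_eq_real, cdf_eq_real]
  have hpos : 0 < (gaussianReal 0 v).real (Set.Ioc a b) := by
    refine ENNReal.toReal_pos ?_ (measure_ne_top _ _)
    intro h0
    have := gaussianReal_absolutelyContinuous' 0 hv h0
    rw [Real.volume_Ioc] at this
    simp at this
    linarith
  have hun : Set.Iic b = Set.Iic a ∪ Set.Ioc a b := (Set.Iic_union_Ioc_eq_Iic h.le).symm
  rw [hun, measureReal_union (Set.Iic_disjoint_Ioc le_rfl) measurableSet_Ioc]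
  linarith
/-- almost-sure central limit theorem from the variance inequality. -/
theorem stmt19 {A : Type*} [MeasurableSpace A]
    (θ : ℝ) (hθ0 : 0 < θ) (hθ1 : θ < 1)
    (μ : Measure (ℕ → A)) [IsProbabilityMeasure μ]
    (hinv : MeasurePreserving shift μ μ)
    (C : ℝ) (hC : 0 < C)
    (hvar : ∀ (n : ℕ), 1 ≤ n → ∀ (K : (Fin n → (ℕ → A)) → ℝ) (ℓ : Fin n → ℝ),
      SepLip θ K ℓ →
      ∫ x, (K (fun i => shift^[(i : ℕ)] x) - ∫ y, K (fun i => shift^[(i : ℕ)] y) ∂μ) ^ 2 ∂μ ≤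
        C * ∑ i, ℓ i ^ 2)
    (f : (ℕ → A) → ℝ) (L : ℝ) (hf : ∀ x y, |f x - f y| ≤ L * dtheta θ x y)
    (hf0 : ∫ x, f x ∂μ = 0)
    (hsum : Summable fun l : ℕ => ∫ x, f x * f (shift^[l + 1] x) ∂μ)
    (σ2 : ℝ)
    (hσ2 : σ2 = ∫ x, f x ^ 2 ∂μ + 2 * ∑' l : ℕ, ∫ x, f x * f (shift^[l + 1] x) ∂μ)
    (hσ2pos : 0 < σ2)
    (hclt : ∀ gB : BoundedContinuousFunction ℝ ℝ,
      Tendsto (fun n : ℕ => ∫ x, gB (birk f n x / Real.sqrt n) ∂μ) atTop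
        (𝓝 (∫ u, gB u ∂(ProbabilityTheory.gaussianReal 0 σ2.toNNReal)))) :
    ∀ᵐ x ∂μ, Tendsto
      (fun N => W1 (ANmeas f x N) (ProbabilityTheory.gaussianReal 0 σ2.toNNReal))
      atTop (𝓝 0) := by
  set G := ProbabilityTheory.gaussianReal 0 σ2.toNNReal with hG
  have hv : σ2.toNNReal ≠ 0 := by simpa using hσ2pos
  have hfm : AEMeasurable f μ := f_aemeas μ hinv f G hclt
  have hL : (0 : ℝ) ≤ |L| := abs_nonneg L
  have hf' : ∀ x y, |f x - f y| ≤ |L| * dtheta θ x y := fun x y =>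
    (hf x y).trans (mul_le_mul_of_nonneg_right (le_abs_self L) (dtheta_nonneg hθ0 x y))
  obtain ⟨x0⟩ : Nonempty (ℕ → A) := nonempty_of_isProbabilityMeasure μ
  have hB : ∀ x, |f x| ≤ |L| + |f x0| := fun x => by
    have h1 := hf' x x0
    have h2 := mul_le_mul_of_nonneg_left (dtheta_le_one hθ0 hθ1 x x0) hL
    have h3 := abs_sub_abs_le_abs_sub (f x) (f x0)
    linarith
  have hG1 : Integrable (fun u : ℝ => u) G :=
    (ProbabilityTheory.memLp_id_gaussianReal' 1 (by simp)).integrable le_rfl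
  have hG2 : Integrable (fun u : ℝ => u ^ 2) G :=
    (ProbabilityTheory.memLp_id_gaussianReal' 2 (by simp)).integrable_sq
  have hVn := second_moment hθ0 μ hinv C hC hvar hf' hfm hB hf0
  have hmom := abs_moment_tendsto μ hinv hfm hB hVn G hG1 hG2 hclt
  have habs := as_conv hθ0 μ hinv C hC hvar hL hf' hfm hB (g := fun u => |u|) zero_le_one
    (fun u v => by rw [one_mul]; exact abs_abs_sub_abs_le_abs_sub u v) continuous_abs
    (fun u => abs_nonneg u) _ hmom
  have hramp : ∀ p : ℚ × ℚ, ∀ᵐ x ∂μ, p.1 < p.2 → Tendsto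
      (fun N => RN f (ramp p.1 p.2) N x / HH N) atTop (𝓝 (∫ u, ramp p.1 p.2 u ∂G)) := by
    intro p
    by_cases hp : p.1 < p.2
    · have hp' : (p.1 : ℝ) < p.2 := by exact_mod_cast hp
      have hpp : (0 : ℝ) < p.2 - p.1 := by linarith
      let gB : BoundedContinuousFunction ℝ ℝ := BoundedContinuousFunction.ofNormedAddCommGroup
        (ramp p.1 p.2) (ramp_cont _ _) 1 (fun u => by
          rw [Real.norm_eq_abs, abs_of_nonneg (ramp_nonneg _ _ _)]; exact ramp_le_one _ _ _)
      filter_upwards [as_conv hθ0 μ hinv C hC hvar hL hf' hfm hB (g := ramp p.1 p.2)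
        (by positivity : (0 : ℝ) ≤ 1 / ((p.2 : ℝ) - p.1)) (ramp_lip hp') (ramp_cont _ _)
        (ramp_nonneg _ _) _ (hclt gB)] with x hx _
      exact hx
    · exact Eventually.of_forall fun x h => absurd h hp
  filter_upwards [habs, ae_all_iff.2 hramp] with x hx1 hx2
  rw [← tendsto_add_atTop_iff_nat 1]
  have hpr : ∀ N, IsProbabilityMeasure (ANmeas f x (N + 1)) := fun N => AN_prob f x (by omega)
  refine W1_tendsto (fun N => ANmeas f x (N + 1)) G (gauss_cdf_strict hv)
    (fun N => AN_int f x (by omega) _) hG1 (fun q r hqr => ?_) ?_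
  · refine ((tendsto_add_atTop_iff_nat 1).2 (hx2 (q, r) hqr)).congr fun N => ?_
    exact (AN_integral f x (by omega) _).symm
  · refine ((tendsto_add_atTop_iff_nat 1).2 hx1).congr fun N => ?_
    exact (AN_integral f x (by omega) _).symm
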